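/- Let [a,b] be a nondegenerate compact interval. Let {(aₙⁱ)ₙ}_{i∈I} be a family of real sequences generating a free algebra 𝓛 (under coordinatewise operations) such that every nonzero element of 𝓛 lies in c₀ \ ℓ₁, and let (uₙ)_{n≥1} ∈ ℱ with uₙ ≥ 0 on [a,b] for every n. Then the family {(aₙⁱ uₙ)ₙ}_{i∈I} generates a free algebra 𝒜 in C([a,b])^ℕ (with coordinatewise operations) such that 𝒜 \ {0} ⊂ 𝒜ℳ𝒲; that is, for every N ∈ ℕ, every nonzero real polynomial P in N variables with zero constant term, and all pairwise distinct i₁,…,i_N ∈ I, the sequence P((aₙ^{i₁}uₙ)ₙ, …, (aₙ^{i_N}uₙ)ₙ) is a nonzero element of 𝒜ℳ𝒲. -/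

import Mathlib

open Filter Topology

/-- The family ℱ: sequences of continuous functions on [a,b] with pairwise disjoint
supports, uniformly bounded and uniformly far from zero in sup norm. -/
def MemF (a b : ℝ) (u : ℕ → C(Set.Icc a b, ℝ)) : Prop :=
  (∀ n m, n ≠ m → Function.support ⇑(u n) ∩ Function.support ⇑(u m) = ∅) ∧
  0 < ⨅ n, ‖u n‖ ∧ BddAbove (Set.range fun n => ‖u n‖)

/-- Anti M-Weierstrass sequences. -/
def AntiMW (a b : ℝ) (f : ℕ → C(Set.Icc a b, ℝ)) : Prop :=
  (∀ x : Set.Icc a b, Summable fun n => |f n x|) ∧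
  (∃ S : Set.Icc a b → ℝ,
    TendstoUniformly (fun N x => ∑ n ∈ Finset.range N, f n x) S atTop) ∧
  ¬ Summable fun n => ‖f n‖

/-!
Along the ray through `A n`, the polynomial `P` becomes a one-variable polynomial `p n` of degree at
most `P.totalDegree`, with `f n = p n ∘ u n` the `n`-th term of the series and `p n 1 = P (A n)`.
The terms have disjoint supports because `p n 0 = 0`, and they tend to `0` uniformly because
`A n → 0` while `u n` stays bounded; so the series has at most one nonzero term at each point and
converges uniformly. Each `u n` vanishes somewhere, namely on the support of another `u m`, so by
connectedness `‖u n x‖` takes all values in `[0, c]`, where `c` is the infimum of the sup norms.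
Lagrange interpolation at points of the range of `u n` whose separation depends only on `c` and the
degree therefore bounds `|p n 1| = |P (A n)|` by a constant, independent of `n`, times the sup norm
of `f n`. Hence the sup norms are not summable.
-/

section DisjointSupports

open Function

variable {ι α E : Type*} [Zero E] {f : ι → α → E}

theorem subsingleton_support_apply (hf : Pairwise (Disjoint on fun i => support (f i))) (x : α) :
    (support fun i => f i x).Subsingleton :=
  subsingleton_setOfPred_mem_iff_pairwise_disjoint.2 hf x

theorem exists_apply_eq_zero_of_pairwise_disjoint_support [Nontrivial ι]
    (hf : Pairwise (Disjoint on fun i => support (f i))) (hne : ∀ i, f i ≠ 0) (i : ι) :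
    ∃ x, f i x = 0 := by
  obtain ⟨j, hij⟩ := exists_ne i
  obtain ⟨x, hx⟩ := Function.ne_iff.1 (hne j)
  exact ⟨x, notMem_support.1 (Set.disjoint_left.1 (hf hij) hx)⟩

theorem tendstoUniformly_sum_range_of_pairwise_disjoint_support {G : Type*} [AddCommMonoid G]
    [UniformSpace G] {f : ℕ → α → G} (hf : Pairwise (Disjoint on fun n => support (f n)))
    (h0 : TendstoUniformly f 0 atTop) :
    TendstoUniformly (fun N x => ∑ n ∈ Finset.range N, f n x) (fun x => ∑ᶠ n, f n x) atTop := by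
  intro U hU
  obtain ⟨M, hM⟩ := eventually_atTop.1 (h0 _ (symm_le_uniformity hU))
  filter_upwards [eventually_ge_atTop M] with N hN x
  rcases (subsingleton_support_apply hf x).eq_empty_or_singleton with hx | ⟨m, hm⟩
  · have hzero : ∀ n, f n x = 0 := congr_fun (support_eq_empty_iff.1 hx)
    simpa only [hzero, finsum_zero, Finset.sum_const_zero] using refl_mem_uniformity hU
  · have hzero : ∀ n ≠ m, f n x = 0 := fun n hn =>
      notMem_support.1 fun hmem => hn (hm.subset hmem)
    rw [finsum_eq_single _ m hzero]
    rcases lt_or_ge m N with hmN | hNm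
    · rw [Finset.sum_eq_single_of_mem m (Finset.mem_range.2 hmN) fun n _ => hzero n]
      exact refl_mem_uniformity hU
    · rw [Finset.sum_eq_zero fun n hn => hzero n ((Finset.mem_range.1 hn).trans_le hNm).ne]
      exact hM m (hN.trans hNm) x

end DisjointSupports

section Interpolation

open Polynomial

variable {ι 𝕜 : Type*} [NormedField 𝕜] {s : Finset ι} {v : ι → 𝕜} {δ ρ M : ℝ} {w : 𝕜}

theorem norm_eval_lagrangeBasis_le [DecidableEq ι] (hδ : 0 < δ)
    (hsep : (s : Set ι).Pairwise fun i j => δ ≤ ‖v i - v j‖) (hw : ∀ i ∈ s, ‖w - v i‖ ≤ ρ)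
    {i : ι} (hi : i ∈ s) : ‖(Lagrange.basis s v i).eval w‖ ≤ (ρ / δ) ^ (s.card - 1) := by
  rw [Lagrange.basis, eval_prod, norm_prod, ← Finset.card_erase_of_mem hi]
  refine (Finset.prod_le_prod (fun _ _ => norm_nonneg _) fun j hj => ?_).trans_eq
    (Finset.prod_const (ρ / δ))
  obtain ⟨hji, hj⟩ := Finset.mem_erase.1 hj
  calc ‖(Lagrange.basisDivisor (v i) (v j)).eval w‖ = ‖w - v j‖ / ‖v i - v j‖ := by
        simp [Lagrange.basisDivisor, div_eq_inv_mul]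
    _ ≤ ρ / δ :=
        div_le_div₀ ((norm_nonneg _).trans (hw j hj)) (hw j hj) hδ (hsep hi hj hji.symm)

theorem norm_eval_le_of_separated_nodes {p : 𝕜[X]} (hp : p.degree < s.card) (hδ : 0 < δ)
    (hsep : (s : Set ι).Pairwise fun i j => δ ≤ ‖v i - v j‖) (hw : ∀ i ∈ s, ‖w - v i‖ ≤ ρ)
    (hM : ∀ i ∈ s, ‖p.eval (v i)‖ ≤ M) :
    ‖p.eval w‖ ≤ s.card * (ρ / δ) ^ (s.card - 1) * M := by
  classical
  have hinj : Set.InjOn v s := fun i hi j hj hij => by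
    by_contra hne
    have hle : δ ≤ ‖v i - v j‖ := hsep hi hj hne
    rw [hij, sub_self, norm_zero] at hle
    exact hle.not_gt hδ
  calc ‖p.eval w‖ = ‖∑ i ∈ s, p.eval (v i) * (Lagrange.basis s v i).eval w‖ := by
        conv_lhs => rw [Lagrange.eq_interpolate hinj hp]
        simp only [Lagrange.interpolate_apply, eval_finsetSum, eval_mul, eval_C]
    _ ≤ ∑ _i ∈ s, M * (ρ / δ) ^ (s.card - 1) := by
        refine norm_sum_le_of_le _ fun i hi => (norm_mul_le _ _).trans ?_
        exact mul_le_mul (hM i hi) (norm_eval_lagrangeBasis_le hδ hsep hw hi) (norm_nonneg _)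
          ((norm_nonneg _).trans (hM i hi))
    _ = s.card * (ρ / δ) ^ (s.card - 1) * M := by
        rw [Finset.sum_const, nsmul_eq_mul]
        ring

end Interpolation

section PolynomialOfContinuousMap

open Polynomial

variable {X : Type*} [TopologicalSpace X] [CompactSpace X] [PreconnectedSpace X]

theorem exists_norm_apply_eq {E : Type*} [SeminormedAddCommGroup E] {u : C(X, E)} {x₀ : X}
    (hx₀ : u x₀ = 0) {t : ℝ} (ht₀ : 0 ≤ t) (ht : t ≤ ‖u‖) : ∃ x, ‖u x‖ = t := by
  obtain ⟨x₁, -, hmax⟩ := isCompact_univ.exists_isMaxOn ⟨x₀, Set.mem_univ x₀⟩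
    (map_continuous u).norm.continuousOn
  have hnorm : ‖u‖ ≤ ‖u x₁‖ :=
    (ContinuousMap.norm_le _ (norm_nonneg _)).2 fun x => hmax (Set.mem_univ x)
  exact mem_range_of_exists_le_of_exists_ge (map_continuous u).norm
    ⟨x₀, by rwa [hx₀, norm_zero]⟩ ⟨x₁, ht.trans hnorm⟩

theorem exists_norm_eval_le_mul_norm_aeval {𝕜 : Type*} [NormedField 𝕜] {c : ℝ} (hc : 0 < c)
    (d : ℕ) (w : 𝕜) :
    ∃ K, ∀ u : C(X, 𝕜), (∃ x, u x = 0) → c ≤ ‖u‖ →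
      ∀ p : 𝕜[X], p.natDegree ≤ d → ‖p.eval w‖ ≤ K * ‖aeval u p‖ := by
  set δ : ℝ := c / (d + 1)
  have hδ : 0 < δ := by positivity
  let nodes := Finset.range (d + 1)
  refine ⟨nodes.card * ((‖w‖ + c) / δ) ^ (nodes.card - 1), fun u ⟨x₀, hx₀⟩ hcu p hp => ?_⟩
  have node_le {i : ℕ} (hi : i ∈ nodes) : i * δ ≤ c := by
    have hid : (i : ℝ) ≤ d + 1 := by exact_mod_cast (Finset.mem_range.1 hi).le
    calc i * δ ≤ (d + 1) * δ := by gcongr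
      _ = c := mul_div_cancel₀ c (by positivity)
  have exists_node (i : ℕ) (hi : i ∈ nodes) : ∃ x, ‖u x‖ = i * δ :=
    exists_norm_apply_eq hx₀ (by positivity) ((node_le hi).trans hcu)
  have : Nonempty X := ⟨x₀⟩
  choose! x hx using exists_node
  refine norm_eval_le_of_separated_nodes (s := nodes) (v := fun i => u (x i)) ?_ hδ ?_ ?_ ?_
  · rw [Finset.card_range]
    exact degree_le_natDegree.trans_lt (by exact_mod_cast Nat.lt_succ_of_le hp)
  · intro i hi j hj hij
    have hone : (1 : ℝ) ≤ |(i : ℝ) - j| := by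
      exact_mod_cast Int.one_le_abs (sub_ne_zero.2 (Nat.cast_injective.ne hij))
    calc δ ≤ |(i : ℝ) - j| * δ := le_mul_of_one_le_left hδ.le hone
      _ = |‖u (x i)‖ - ‖u (x j)‖| := by
          rw [hx i hi, hx j hj, ← sub_mul, abs_mul, abs_of_pos hδ]
      _ ≤ ‖u (x i) - u (x j)‖ := abs_norm_sub_norm_le _ _
  · intro i hi
    exact (norm_sub_le _ _).trans (by gcongr; exact (hx i hi).trans_le (node_le hi))
  · intro i _
    simpa only [aeval_continuousMap_apply] using (aeval u p).norm_coe_le_norm (x i)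

end PolynomialOfContinuousMap

section Ray

variable {σ R : Type*} [CommSemiring R]

/-- The one-variable polynomial `t ↦ P (t y)`, the restriction of `P` to the ray through `y`. -/
noncomputable def restrictToRay (y : σ → R) (P : MvPolynomial σ R) : Polynomial R :=
  MvPolynomial.aeval (fun k => y k • Polynomial.X) P

theorem natDegree_restrictToRay_le (y : σ → R) (P : MvPolynomial σ R) :
    (restrictToRay y P).natDegree ≤ P.totalDegree := by
  simpa only [mul_one, restrictToRay] using MvPolynomial.aeval_natDegree_le P le_rfl _ fun k =>
    (Polynomial.natDegree_smul_le (y k) Polynomial.X).trans Polynomial.natDegree_X_le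

theorem aeval_restrictToRay {S : Type*} [CommSemiring S] [Algebra R S] (y : σ → R)
    (P : MvPolynomial σ R) (w : S) :
    Polynomial.aeval w (restrictToRay y P) = MvPolynomial.aeval (fun k => y k • w) P := by
  simp only [restrictToRay, MvPolynomial.comp_aeval_apply, map_smul, Polynomial.aeval_X]

theorem eval_one_restrictToRay (y : σ → R) (P : MvPolynomial σ R) :
    (restrictToRay y P).eval 1 = MvPolynomial.eval y P := by
  simpa [Polynomial.coe_aeval_eq_eval, MvPolynomial.coe_aeval_eq_eval]
    using aeval_restrictToRay y P (1 : R)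

theorem eval_zero_restrictToRay (y : σ → R) (P : MvPolynomial σ R) :
    (restrictToRay y P).eval 0 = MvPolynomial.coeff 0 P := by
  simpa [Polynomial.coe_aeval_eq_eval, MvPolynomial.constantCoeff_eq]
    using aeval_restrictToRay y P (0 : R)

theorem support_aeval_smul_subset {X : Type*} [TopologicalSpace X] [TopologicalSpace R]
    [IsTopologicalSemiring R] {P : MvPolynomial σ R} (hP : MvPolynomial.coeff 0 P = 0)
    (y : σ → R) (u : C(X, R)) :
    Function.support ⇑(MvPolynomial.aeval (fun k => y k • u) P) ⊆ Function.support ⇑u := by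
  refine Function.support_subset_iff'.2 fun x hx => ?_
  rw [← aeval_restrictToRay, Polynomial.aeval_continuousMap_apply, Function.notMem_support.1 hx,
    eval_zero_restrictToRay, hP]

theorem tendsto_aeval_zero {ι S : Type*} [CommSemiring S] [Algebra R S] [TopologicalSpace S]
    [IsTopologicalSemiring S] {P : MvPolynomial σ R} (hP : MvPolynomial.coeff 0 P = 0)
    {l : Filter ι} {g : ι → σ → S} (hg : ∀ k, Tendsto (fun n => g n k) l (𝓝 0)) :
    Tendsto (fun n => MvPolynomial.aeval (g n) P) l (𝓝 0) := by
  have hcont : Continuous fun y : σ → S => MvPolynomial.aeval y P := by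
    simpa only [MvPolynomial.eval_map, MvPolynomial.aeval_def] using
      MvPolynomial.continuous_eval (MvPolynomial.map (algebraMap R S) P)
  have hzero : MvPolynomial.aeval (0 : σ → S) P = 0 := by
    rw [MvPolynomial.aeval_zero, MvPolynomial.constantCoeff_eq, hP, map_zero]
  exact (hcont.tendsto' 0 0 hzero).comp (tendsto_pi_nhds.2 hg)

end Ray

section AntiMWeierstrass

open Function

variable {X 𝕜 σ : Type*} [TopologicalSpace X] [CompactSpace X] [NormedField 𝕜]

/-- Anti M-Weierstrass sequences on an arbitrary compact space: the series converges absolutely at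
every point and uniformly, but its sup norms are not summable. On `[a, b]` with real scalars this
unfolds to `AntiMW a b`. -/
def IsAntiMWeierstrass (f : ℕ → C(X, 𝕜)) : Prop :=
  (∀ x, Summable fun n => ‖f n x‖) ∧
  (∃ S : X → 𝕜, TendstoUniformly (fun N x => ∑ n ∈ Finset.range N, f n x) S atTop) ∧
  ¬ Summable fun n => ‖f n‖

theorem isAntiMWeierstrass_of_pairwise_disjoint_support {f : ℕ → C(X, 𝕜)}
    (hf : Pairwise (Disjoint on fun n => support ⇑(f n))) (h0 : Tendsto f atTop (𝓝 0))
    (hns : ¬ Summable fun n => ‖f n‖) : IsAntiMWeierstrass f := by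
  refine ⟨fun x => ?_, ⟨_, tendstoUniformly_sum_range_of_pairwise_disjoint_support hf
    (ContinuousMap.tendsto_iff_tendstoUniformly.1 h0)⟩, hns⟩
  exact summable_of_hasFiniteSupport
    ((subsingleton_support_apply hf x).finite.subset fun n => norm_ne_zero_iff.1)

theorem IsAntiMWeierstrass.ne_zero {f : ℕ → C(X, 𝕜)} (hf : IsAntiMWeierstrass f) : f ≠ 0 := by
  rintro rfl
  exact hf.2.2 (by simp)

theorem summable_norm_eval_of_summable_norm_aeval [PreconnectedSpace X] {u : ℕ → C(X, 𝕜)}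
    (hdisj : Pairwise (Disjoint on fun n => support ⇑(u n))) (hinf : 0 < ⨅ n, ‖u n‖)
    (A : σ → ℕ → 𝕜) (P : MvPolynomial σ 𝕜)
    (hsum : Summable fun n => ‖MvPolynomial.aeval (fun k => A k n • u n) P‖) :
    Summable fun n => ‖MvPolynomial.eval (fun k => A k n) P‖ := by
  have hle (n : ℕ) : ⨅ m, ‖u m‖ ≤ ‖u n‖ :=
    ciInf_le ⟨0, Set.forall_mem_range.2 fun m => norm_nonneg (u m)⟩ n
  have hne (n : ℕ) : ⇑(u n) ≠ 0 := fun h =>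
    (hinf.trans_le (hle n)).ne' (norm_eq_zero.2 (DFunLike.coe_injective h))
  obtain ⟨K, hK⟩ := exists_norm_eval_le_mul_norm_aeval (X := X) hinf P.totalDegree (1 : 𝕜)
  refine (hsum.mul_left K).of_nonneg_of_le (fun _ => norm_nonneg _) fun n => ?_
  rw [← eval_one_restrictToRay, ← aeval_restrictToRay]
  exact hK (u n) (exists_apply_eq_zero_of_pairwise_disjoint_support hdisj hne n) (hle n) _
    (natDegree_restrictToRay_le _ P)

theorem isAntiMWeierstrass_aeval_smul [PreconnectedSpace X] {u : ℕ → C(X, 𝕜)}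
    (hdisj : Pairwise (Disjoint on fun n => support ⇑(u n))) (hinf : 0 < ⨅ n, ‖u n‖)
    (hbdd : BddAbove (Set.range fun n => ‖u n‖)) {A : σ → ℕ → 𝕜}
    (hA : ∀ k, Tendsto (A k) atTop (𝓝 0)) {P : MvPolynomial σ 𝕜}
    (hP : MvPolynomial.coeff 0 P = 0)
    (hns : ¬ Summable fun n => ‖MvPolynomial.eval (fun k => A k n) P‖) :
    IsAntiMWeierstrass fun n => MvPolynomial.aeval (fun k => A k n • u n) P := by
  refine isAntiMWeierstrass_of_pairwise_disjoint_support ?_ ?_ ?_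
  · exact fun n m hnm => (hdisj hnm).mono (support_aeval_smul_subset hP _ _)
      (support_aeval_smul_subset hP _ _)
  · exact tendsto_aeval_zero hP fun k =>
      (hA k).zero_smul_isBoundedUnder_le hbdd.isBoundedUnder_of_range
  · exact mt (summable_norm_eval_of_summable_norm_aeval hdisj hinf A P) hns

theorem stmt15_general [PreconnectedSpace X] {I : Type*} (A : I → ℕ → 𝕜)
    (hL : ∀ (N : ℕ) (P : MvPolynomial (Fin N) 𝕜), P ≠ 0 → MvPolynomial.coeff 0 P = 0 →
      ∀ v : Fin N → I, Injective v →
        Tendsto (fun n => MvPolynomial.eval (fun k => A (v k) n) P) atTop (𝓝 0) ∧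
        ¬ Summable fun n => ‖MvPolynomial.eval (fun k => A (v k) n) P‖)
    (u : ℕ → C(X, 𝕜)) (hdisj : Pairwise (Disjoint on fun n => support ⇑(u n)))
    (hinf : 0 < ⨅ n, ‖u n‖) (hbdd : BddAbove (Set.range fun n => ‖u n‖))
    (N : ℕ) (P : MvPolynomial (Fin N) 𝕜) (hP : P ≠ 0) (hP0 : MvPolynomial.coeff 0 P = 0)
    (v : Fin N → I) (hv : Injective v) :
    (fun n => MvPolynomial.aeval (fun k => A (v k) n • u n) P) ≠ (0 : ℕ → C(X, 𝕜)) ∧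
      IsAntiMWeierstrass fun n => MvPolynomial.aeval (fun k => A (v k) n • u n) P := by
  have hA (k : Fin N) : Tendsto (A (v k)) atTop (𝓝 0) := by
    simpa only [MvPolynomial.eval_X] using
      (hL N (.X k) (MvPolynomial.X_ne_zero k) (MvPolynomial.coeff_zero_X k) v hv).1
  have hf := isAntiMWeierstrass_aeval_smul hdisj hinf hbdd hA hP0 (hL N P hP hP0 v hv).2
  exact ⟨hf.ne_zero, hf⟩

end AntiMWeierstrass

theorem stmt15 (a b : ℝ) (hab : a < b) {I : Type*} (A : I → ℕ → ℝ)
    -- the family {(aₙⁱ)ₙ} generates a free algebra 𝓛 (coordinatewise operations)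
    -- all of whose nonzero elements lie in c₀ \ ℓ₁:
    (hL : ∀ (N : ℕ) (P : MvPolynomial (Fin N) ℝ), P ≠ 0 →
      MvPolynomial.coeff 0 P = 0 →
      ∀ v : Fin N → I, Function.Injective v →
        (fun n => MvPolynomial.eval (fun k => A (v k) n) P) ≠ (0 : ℕ → ℝ) ∧
        Tendsto (fun n => MvPolynomial.eval (fun k => A (v k) n) P) atTop (nhds 0) ∧
        ¬ Summable fun n => |MvPolynomial.eval (fun k => A (v k) n) P|)
    (u : ℕ → C(Set.Icc a b, ℝ)) (hu : MemF a b u)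
    (hupos : ∀ n, ∀ x : Set.Icc a b, 0 ≤ u n x) :
    ∀ (N : ℕ) (P : MvPolynomial (Fin N) ℝ), P ≠ 0 →
      MvPolynomial.coeff 0 P = 0 →
      ∀ v : Fin N → I, Function.Injective v →
        (fun n => MvPolynomial.aeval (fun k => A (v k) n • u n) P) ≠
            (0 : ℕ → C(Set.Icc a b, ℝ)) ∧
        AntiMW a b (fun n => MvPolynomial.aeval (fun k => A (v k) n • u n) P) := by
  have : PreconnectedSpace (Set.Icc a b) := Subtype.preconnectedSpace isPreconnected_Icc
  exact stmt15_general A (fun N P hP hP0 v hv => (hL N P hP hP0 v hv).2) u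
    (fun n m hnm => Set.disjoint_iff_inter_eq_empty.2 (hu.1 n m hnm)) hu.2.1 hu.2.2
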